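/- arXiv:1607.05188 — 3 statements merged into one kernel-verified Lean document; each statement's English description precedes it below -/
import Mathlib

section
/- Let X and Y be standard Borel spaces, let m be a σ-finite Borel measure on X, let φ : X → Y be a Borel measurable map, let E ⊆ X be a Borel set on which φ is injective, and let f : X → ℝ be m-integrable with f = 0 m-almost everywhere on X ∖ E. If ∫_{φ⁻¹(B)} f dm = 0 for every Borel set B ⊆ Y, then f = 0 m-almost everywhere. -/
open MeasureTheory

/-!
Up to a null set, `{x | f x ≠ 0}` is a measurable set `S ⊆ E`. By the Lusin–Souslin theorem
`φ '' t` is measurable for every measurable `t ⊆ S`, and injectivity of `φ` on `S` gives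
`φ ⁻¹' (φ '' t) ∩ S = t`. So every measurable subset of `S` is the trace on `S` of the preimage of
a measurable set. Since `f` vanishes almost everywhere off `S`, its integral over each measurable
set equals its integral over such a preimage, which is zero.
-/

theorem exists_measurableSet_subset_ae_notMem_imp_eq_zero {X V : Type*} [MeasurableSpace X]
    [TopologicalSpace V] [TopologicalSpace.MetrizableSpace V] [Zero V] {m : Measure X} {E : Set X}
    {f : X → V} (hf : AEStronglyMeasurable f m) (hfE : ∀ᵐ x ∂m, x ∉ E → f x = 0) :
    ∃ S ⊆ E, MeasurableSet S ∧ ∀ᵐ x ∂m, x ∉ S → f x = 0 := by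
  have hsupp : (Function.support f ∩ E : Set X) =ᵐ[m] Function.support f :=
    Filter.eventuallyEq_set.mpr <| hfE.mono fun _ hx ↦ and_iff_left_of_imp (not_imp_comm.mp hx)
  have hnull : NullMeasurableSet (Function.support f ∩ E) m :=
    hf.nullMeasurableSet_support.congr hsupp.symm
  obtain ⟨S, hSE, hS, hSsupp⟩ := hnull.exists_measurable_subset_ae_eq
  refine ⟨S, hSE.trans Set.inter_subset_right, hS, ?_⟩
  filter_upwards [(hSsupp.trans hsupp).mem_iff] with x hx hxS
  exact Function.notMem_support.mp (mt hx.mpr hxS)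

theorem setIntegral_inter_eq_of_ae_notMem_imp_eq_zero {X V : Type*} [MeasurableSpace X]
    [NormedAddCommGroup V] [NormedSpace ℝ V] {m : Measure X} {s S : Set X} {f : X → V}
    (hs : NullMeasurableSet s m) (hfS : ∀ᵐ x ∂m, x ∉ S → f x = 0) :
    ∫ x in s ∩ S, f x ∂m = ∫ x in s, f x ∂m := by
  refine (setIntegral_eq_of_subset_of_ae_sdiff_eq_zero hs Set.inter_subset_left ?_).symm
  filter_upwards [hfS] with x hx hxs
  exact hx fun hxS ↦ hxs.2 ⟨hxs.1, hxS⟩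

section StandardBorel

variable {X Y : Type*} [MeasurableSpace X] [StandardBorelSpace X] [MeasurableSpace Y]
  [MeasurableSpace.CountablySeparated Y] {φ : X → Y}

theorem exists_measurableSet_preimage_inter_eq {s S : Set X} (hφ : Measurable φ)
    (hs : MeasurableSet s) (hS : MeasurableSet S) (hinj : Set.InjOn φ S) :
    ∃ B, MeasurableSet B ∧ φ ⁻¹' B ∩ S = s ∩ S :=
  ⟨φ '' (s ∩ S),
    (hs.inter hS).image_of_measurable_injOn hφ (hinj.mono Set.inter_subset_right),
    hinj.preimage_image_inter Set.inter_subset_right⟩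

theorem eq_zero_of_pushforward_eq_zero_general {V : Type*} [NormedAddCommGroup V]
    [NormedSpace ℝ V] [CompleteSpace V] {m : Measure X} {E : Set X} {f : X → V}
    (hφ : Measurable φ) (hinj : Set.InjOn φ E) (hf : Integrable f m)
    (hfE : ∀ᵐ x ∂m, x ∉ E → f x = 0)
    (hpush : ∀ B : Set Y, MeasurableSet B → ∫ x in φ ⁻¹' B, f x ∂m = 0) :
    ∀ᵐ x ∂m, f x = 0 := by
  obtain ⟨S, hSE, hS, hfS⟩ :=
    exists_measurableSet_subset_ae_notMem_imp_eq_zero hf.aestronglyMeasurable hfE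
  refine hf.ae_eq_zero_of_forall_setIntegral_eq_zero fun s hs _ ↦ ?_
  obtain ⟨B, hB, hBs⟩ := exists_measurableSet_preimage_inter_eq hφ hs hS (hinj.mono hSE)
  calc ∫ x in s, f x ∂m
    _ = ∫ x in s ∩ S, f x ∂m :=
      (setIntegral_inter_eq_of_ae_notMem_imp_eq_zero hs.nullMeasurableSet hfS).symm
    _ = ∫ x in φ ⁻¹' B ∩ S, f x ∂m := by rw [hBs]
    _ = ∫ x in φ ⁻¹' B, f x ∂m :=
      setIntegral_inter_eq_of_ae_notMem_imp_eq_zero (hφ hB).nullMeasurableSet hfS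
    _ = 0 := hpush B hB

end StandardBorel

/-- Claim (eq:p0): if `φ` is injective on a Borel set `E`, `f` is `m`-integrable and
vanishes `m`-a.e. outside `E`, and the pushforward of the signed measure `f·m` under
`φ` vanishes (i.e. `∫_{φ⁻¹(B)} f dm = 0` for every Borel `B`), then `f = 0` `m`-a.e. -/
theorem eq_zero_of_pushforward_eq_zero
    {X Y : Type*} [MeasurableSpace X] [StandardBorelSpace X]
    [MeasurableSpace Y] [StandardBorelSpace Y]
    (m : Measure X) [SigmaFinite m]
    (φ : X → Y) (hφ : Measurable φ)
    (E : Set X) (hE : MeasurableSet E) (hinj : Set.InjOn φ E)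
    (f : X → ℝ) (hf : Integrable f m)
    (hfE : ∀ᵐ x ∂m, x ∉ E → f x = 0)
    (hpush : ∀ B : Set Y, MeasurableSet B → ∫ x in φ ⁻¹' B, f x ∂m = 0) :
    ∀ᵐ x ∂m, f x = 0 :=
  eq_zero_of_pushforward_eq_zero_general hφ hinj hf hfE hpush
end

section
/- Let μ be a locally finite Borel measure on ℝ^d, let v : ℝ^d → ℝ^d be a locally μ-integrable Borel vector field, and let Ω₁, Ω₂ ⊆ ℝ^d be open sets. Suppose that for i = 1, 2 the field v has measure-valued divergence with respect to μ on Ω_i, witnessed by Borel measures σ_i⁺, σ_i⁻ finite on compact subsets of Ω_i with ∫ ⟨∇f, v⟩ dμ = ∫ f dσ_i⁻ − ∫ f dσ_i⁺ for every C¹ function f : ℝ^d → ℝ with compact support contained in Ω_i. Then v has measure-valued divergence with respect to μ on Ω₁ ∪ Ω₂: there exist Borel measures σ⁺, σ⁻, finite on compact subsets of Ω₁ ∪ Ω₂, such that ∫ ⟨∇f, v⟩ dμ = ∫ f dσ⁻ − ∫ f dσ⁺ for every C¹ function f : ℝ^d → ℝ with compact support contained in Ω₁ ∪ Ω₂, and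 moreover for i = 1, 2 and every Borel set A with compact closure contained in Ω_i one has σ⁺(A) + σ_i⁻(A) = σ_i⁺(A) + σ⁻(A). -/
open MeasureTheory Metric
open scoped RealInnerProductSpace ENNReal

open Set Filter
open scoped Manifold

/-! The given measures on `Ω₁` and `Ω₂` are glued by cutting: `Ω₁ \ Ω₂` and `Ω₂ \ Ω₁` are separated
sets, so the space is the union of two closed sets `C` and `D` with `Ω₁ ∩ D ⊆ Ω₂` and
`Ω₂ ∩ C ⊆ Ω₁`. Use the first measures on `C` and the second ones off `C`. If `K ⊆ Ω₁` is compact,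
then `K \ C` lies in `K ∩ D`, a compact subset of `Ω₂`, so the glued measures are finite on `K`, and
likewise for `K ⊆ Ω₂`. On `Ω₁ ∩ Ω₂` both pairs represent the same functional on test functions, so
`σp₁ + σm₂ = σp₂ + σm₁` there, and the glued pair still represents the divergence on each `Ωᵢ`.
A smooth partition of unity writes a test function on `Ω₁ ∪ Ω₂` as a sum of test functions on `Ω₁`
and `Ω₂`, and both sides of the divergence identity are additive. -/

section Topology

variable {X : Type*} [TopologicalSpace X]

theorem exists_isClosed_union_eq_univ_inter_subset [CompletelyNormalSpace X] {U V : Set X}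
    (hU : IsOpen U) (hV : IsOpen V) :
    ∃ C D : Set X, IsClosed C ∧ IsClosed D ∧ C ∪ D = univ ∧ U ∩ D ⊆ V ∧ V ∩ C ⊆ U := by
  have hUV : Disjoint (closure (U \ V)) (V \ U) :=
    (disjoint_sdiff_left.closure_left hV).mono_right sdiff_subset
  have hVU : Disjoint (U \ V) (closure (V \ U)) :=
    (disjoint_sdiff_right.closure_right hU).mono_left sdiff_subset
  obtain ⟨G, H, hG, hH, hUG, hVH, hGH⟩ :=
    separatedNhds_iff_disjoint.2 (CompletelyNormalSpace.completely_normal hUV hVU)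
  refine ⟨Hᶜ, Gᶜ, hH.isClosed_compl, hG.isClosed_compl, ?_, ?_, ?_⟩
  · rw [← compl_inter, hGH.symm.inter_eq, compl_empty]
  · exact fun x ⟨hxU, hxG⟩ => by_contra fun hxV => hxG (hUG ⟨hxU, hxV⟩)
  · exact fun x ⟨hxV, hxH⟩ => by_contra fun hxU => hxH (hVH ⟨hxV, hxU⟩)

variable [MeasurableSpace X] {σ τ : Measure X} {U V : Set X}

/-- The measure `σ` is finite on compact subsets of `U`. Unlike `IsFiniteMeasureOnCompacts`
of the restriction of `σ` to `U`, this allows infinite mass near the boundary of `U`. -/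
def FiniteOnCompactsIn (σ : Measure X) (U : Set X) : Prop :=
  ∀ K, IsCompact K → K ⊆ U → σ K < ∞

namespace FiniteOnCompactsIn

theorem mono (h : FiniteOnCompactsIn σ V) (hUV : U ⊆ V) : FiniteOnCompactsIn σ U :=
  fun K hK hKU => h K hK (hKU.trans hUV)

theorem mono_measure (h : FiniteOnCompactsIn τ U) (hστ : σ ≤ τ) : FiniteOnCompactsIn σ U :=
  fun K hK hKU => (hστ K).trans_lt (h K hK hKU)

theorem add (hσ : FiniteOnCompactsIn σ U) (hτ : FiniteOnCompactsIn τ U) :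
    FiniteOnCompactsIn (σ + τ) U :=
  fun K hK hKU => ENNReal.add_lt_top.2 ⟨hσ K hK hKU, hτ K hK hKU⟩

theorem union [R1Space X] (hU : FiniteOnCompactsIn σ U) (hV : FiniteOnCompactsIn σ V)
    (hUo : IsOpen U) (hVo : IsOpen V) : FiniteOnCompactsIn σ (U ∪ V) := by
  intro K hK hKUV
  obtain ⟨K₁, K₂, hK₁, hK₂, hK₁U, hK₂V, rfl⟩ := hK.binary_compact_cover hUo hVo hKUV
  exact measure_union_lt_top (hU K₁ hK₁ hK₁U) (hV K₂ hK₂ hK₂V)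

theorem integrable [OpensMeasurableSpace X] {F : Type*} [NormedAddCommGroup F]
    (hσ : FiniteOnCompactsIn σ U) {f : X → F} (hf : Continuous f) (hc : HasCompactSupport f)
    (hfU : tsupport f ⊆ U) : Integrable f σ := by
  have : IsFiniteMeasure (σ.restrict (tsupport f)) :=
    isFiniteMeasure_restrict.2 (hσ _ hc hfU).ne
  rw [← integrableOn_iff_integrable_of_support_subset (subset_tsupport f)]
  exact hf.integrable_of_hasCompactSupport hc

theorem sigmaFinite_restrict (hσ : FiniteOnCompactsIn σ U)
    (hUm : MeasurableSet U) (hU : IsSigmaCompact U) : SigmaFinite (σ.restrict U) := by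
  obtain ⟨K, hK, hKU⟩ := hU
  have hσK (n : ℕ) : σ.restrict U (K n ∪ Uᶜ) < ∞ := by
    rw [Measure.restrict_apply' hUm]
    refine (measure_mono ?_).trans_lt (hσ (K n) (hK n) (hKU ▸ subset_iUnion K n))
    rintro x ⟨hx | hx, hxU⟩
    exacts [hx, absurd hxU hx]
  exact ⟨⟨⟨fun n => K n ∪ Uᶜ, fun _ => trivial, hσK, by
    rw [← iUnion_union, hKU, union_compl_self]⟩⟩⟩

end FiniteOnCompactsIn

end Topology

section Piecewise

variable {X : Type*} [MeasurableSpace X]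

/-- The measure that coincides with `σ` on `C` and with `τ` on `Cᶜ`, used to glue measures that
are only meaningful on different open sets. -/
noncomputable def piecewiseMeasure (C : Set X) (σ τ : Measure X) : Measure X :=
  σ.restrict C + τ.restrict Cᶜ

theorem piecewiseMeasure_compl (C : Set X) (σ τ : Measure X) :
    piecewiseMeasure Cᶜ σ τ = piecewiseMeasure C τ σ := by
  rw [piecewiseMeasure, piecewiseMeasure, compl_compl, add_comm]

theorem add_apply_eq_add_apply_of_restrict_eq {α β γ δ : Measure X} {A U : Set X}
    (h : (α + β).restrict U = (γ + δ).restrict U) (hA : A ⊆ U) : α A + β A = γ A + δ A := by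
  rw [← Measure.add_apply, ← Measure.restrict_eq_self (α + β) hA, h, Measure.restrict_eq_self _ hA,
    Measure.add_apply]

theorem restrict_piecewiseMeasure_add {C U V : Set X} {p₁ m₁ p₂ m₂ : Measure X}
    (hC : MeasurableSet C) (hUV : U \ C ⊆ V)
    (h : (p₁ + m₂).restrict (U ∩ V) = (p₂ + m₁).restrict (U ∩ V)) :
    (piecewiseMeasure C p₁ p₂ + m₁).restrict U = (p₁ + piecewiseMeasure C m₁ m₂).restrict U := by
  ext A hA
  have hsub : A ∩ U ∩ Cᶜ ⊆ U ∩ V := fun x hx => ⟨hx.1.2, hUV ⟨hx.1.2, hx.2⟩⟩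
  have hoff : p₁ (A ∩ U ∩ Cᶜ) + m₂ (A ∩ U ∩ Cᶜ) = p₂ (A ∩ U ∩ Cᶜ) + m₁ (A ∩ U ∩ Cᶜ) :=
    add_apply_eq_add_apply_of_restrict_eq h hsub
  simp only [piecewiseMeasure, Measure.restrict_apply hA, Measure.add_apply,
    Measure.restrict_apply' hC, Measure.restrict_apply' hC.compl]
  rw [← measure_inter_add_sdiff (μ := m₁) (A ∩ U) hC,
    ← measure_inter_add_sdiff (μ := p₁) (A ∩ U) hC, sdiff_eq]
  calc p₁ (A ∩ U ∩ C) + p₂ (A ∩ U ∩ Cᶜ) + (m₁ (A ∩ U ∩ C) + m₁ (A ∩ U ∩ Cᶜ))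
      = p₁ (A ∩ U ∩ C) + m₁ (A ∩ U ∩ C) + (p₂ (A ∩ U ∩ Cᶜ) + m₁ (A ∩ U ∩ Cᶜ)) := by ring
    _ = p₁ (A ∩ U ∩ C) + m₁ (A ∩ U ∩ C) + (p₁ (A ∩ U ∩ Cᶜ) + m₂ (A ∩ U ∩ Cᶜ)) := by rw [hoff]
    _ = p₁ (A ∩ U ∩ C) + p₁ (A ∩ U ∩ Cᶜ) + (m₁ (A ∩ U ∩ C) + m₂ (A ∩ U ∩ Cᶜ)) := by ring

theorem FiniteOnCompactsIn.piecewise [TopologicalSpace X] {C D U V : Set X} {σ τ : Measure X}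
    (hσ : FiniteOnCompactsIn σ U) (hτ : FiniteOnCompactsIn τ V) (hC : MeasurableSet C)
    (hD : IsClosed D) (hCD : Cᶜ ⊆ D) (hUD : U ∩ D ⊆ V) :
    FiniteOnCompactsIn (piecewiseMeasure C σ τ) U := by
  intro K hK hKU
  have hσK : σ (K ∩ C) < ∞ := (measure_mono inter_subset_left).trans_lt (hσ K hK hKU)
  have hτK : τ (K ∩ Cᶜ) < ∞ := (measure_mono (inter_subset_inter_right K hCD)).trans_lt <|
    hτ _ (hK.inter_right hD) ((inter_subset_inter_left D hKU).trans hUD)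
  rw [piecewiseMeasure, Measure.add_apply, Measure.restrict_apply' hC,
    Measure.restrict_apply' hC.compl]
  exact ENNReal.add_lt_top.2 ⟨hσK, hτK⟩

end Piecewise

section Integral

theorem setIntegral_eq_integral_of_tsupport_subset {X F : Type*} [TopologicalSpace X]
    [MeasurableSpace X] [NormedAddCommGroup F] [NormedSpace ℝ F] {σ : Measure X} {U : Set X}
    {f : X → F} (hf : tsupport f ⊆ U) : ∫ x in U, f x ∂σ = ∫ x, f x ∂σ :=
  setIntegral_eq_integral_of_forall_compl_eq_zero fun _ hx =>
    image_eq_zero_of_notMem_tsupport fun hx' => hx (hf hx')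

theorem integral_smul_toReal_rnDeriv_sub {X : Type*} [MeasurableSpace X] {p q ν : Measure X}
    [SigmaFinite p] [SigmaFinite q] [p.HaveLebesgueDecomposition ν]
    [q.HaveLebesgueDecomposition ν] {g : X → ℝ} (hp : p ≪ ν) (hq : q ≪ ν)
    (hgp : Integrable g p) (hgq : Integrable g q) :
    ∫ x, g x • ((p.rnDeriv ν x).toReal - (q.rnDeriv ν x).toReal) ∂ν =
      ∫ x, g x ∂p - ∫ x, g x ∂q := by
  rw [← integral_rnDeriv_smul hp, ← integral_rnDeriv_smul hq,
    ← integral_sub ((integrable_rnDeriv_smul_iff hp).2 hgp)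
      ((integrable_rnDeriv_smul_iff hq).2 hgq)]
  simp only [smul_eq_mul, ← sub_mul, mul_comm (g _)]

theorem eq_of_toReal_rnDeriv_ae_eq {X : Type*} [MeasurableSpace X] {p q ν : Measure X}
    [SigmaFinite p] [SigmaFinite q] [p.HaveLebesgueDecomposition ν]
    [q.HaveLebesgueDecomposition ν] (hp : p ≪ ν) (hq : q ≪ ν)
    (h : ∀ᵐ x ∂ν, (p.rnDeriv ν x).toReal = (q.rnDeriv ν x).toReal) : p = q := by
  have hderiv : p.rnDeriv ν =ᵐ[ν] q.rnDeriv ν := by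
    filter_upwards [h, p.rnDeriv_lt_top ν, q.rnDeriv_lt_top ν] with x hx hpx hqx
    exact (ENNReal.toReal_eq_toReal_iff' hpx.ne hqx.ne).1 hx
  rw [← Measure.withDensity_rnDeriv_eq p ν hp, withDensity_congr_ae hderiv,
    Measure.withDensity_rnDeriv_eq q ν hq]

theorem integrable_clm_apply_of_hasCompactSupport {X E F : Type*} [TopologicalSpace X]
    [MeasurableSpace X] [OpensMeasurableSpace X] [NormedAddCommGroup E] [NormedSpace ℝ E]
    [NormedAddCommGroup F] [NormedSpace ℝ F] {μ : Measure X} {v : X → E} {L : X → E →L[ℝ] F}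
    (hv : LocallyIntegrable v μ) (hL : Continuous L) (hc : HasCompactSupport L) :
    Integrable (fun x => L x (v x)) μ := by
  obtain ⟨C, hC⟩ := hc.exists_bound_of_continuous hL
  have hsupp : Function.support (fun x => L x (v x)) ⊆ tsupport L := fun x hx =>
    subset_tsupport L fun h0 => hx (by simp [h0])
  rw [← integrableOn_iff_integrable_of_support_subset hsupp]
  have hLm : AEStronglyMeasurable L (μ.restrict (tsupport L)) :=
    (hL.stronglyMeasurable_of_hasCompactSupport hc).aestronglyMeasurable
  exact (ContinuousLinearMap.id ℝ (E →L[ℝ] F)).integrable_of_bilin_of_bdd_left C hLm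
    (Eventually.of_forall hC) (hv.integrableOn_isCompact hc)

end Integral

section TestFunctions

variable {E : Type*} [NormedAddCommGroup E] [NormedSpace ℝ E] [FiniteDimensional ℝ E]

theorem exists_contDiff_add_eq_of_tsupport_subset_union {F : Type*} [NormedAddCommGroup F]
    [NormedSpace ℝ F] {n : ℕ∞} {f : E → F} {U V : Set E} (hU : IsOpen U) (hV : IsOpen V)
    (hf : ContDiff ℝ n f) (hfUV : tsupport f ⊆ U ∪ V) :
    ∃ g h : E → F, ContDiff ℝ n g ∧ ContDiff ℝ n h ∧
      tsupport g ⊆ tsupport f ∩ U ∧ tsupport h ⊆ tsupport f ∩ V ∧ g + h = f := by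
  have hdisj : Disjoint Uᶜ (tsupport f \ V) :=
    disjoint_left.2 fun x hxU hx => hxU ((hfUV hx.1).resolve_right hx.2)
  obtain ⟨χ, hχ0, hχ1, -⟩ := exists_contMDiffMap_zero_one_nhds_of_isClosed 𝓘(ℝ, E) (n := n)
    hU.isClosed_compl ((isClosed_tsupport f).sdiff hV) hdisj
  have hχ : ContDiff ℝ n χ := χ.contMDiff.contDiff
  refine ⟨fun x => χ x • f x, fun x => (1 - χ x) • f x, hχ.smul hf,
    (contDiff_const.sub hχ).smul hf, fun x hx => ⟨tsupport_smul_subset_right _ f hx, ?_⟩,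
    fun x hx => ⟨tsupport_smul_subset_right _ f hx, ?_⟩, ?_⟩
  · by_contra hxU
    refine notMem_tsupport_iff_eventuallyEq.2 ?_ (tsupport_smul_subset_left χ f hx)
    exact eventually_nhdsSet_iff_forall.1 hχ0 x hxU
  · by_contra hxV
    refine notMem_tsupport_iff_eventuallyEq.2 ?_ (tsupport_smul_subset_left _ f hx)
    filter_upwards [eventually_nhdsSet_iff_forall.1 hχ1 x
      ⟨tsupport_smul_subset_right _ f hx, hxV⟩] with y hy
    simp [hy]
  · ext x
    simp [sub_smul]

variable [MeasurableSpace E] [BorelSpace E]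

theorem restrict_eq_of_forall_integral_contDiff_eq {n : ℕ∞} {U : Set E} (hU : IsOpen U)
    {α β : Measure E} (hα : FiniteOnCompactsIn α U) (hβ : FiniteOnCompactsIn β U)
    (h : ∀ f : E → ℝ, ContDiff ℝ n f → HasCompactSupport f → tsupport f ⊆ U →
      ∫ x, f x ∂α = ∫ x, f x ∂β) :
    α.restrict U = β.restrict U := by
  have hUσ : IsSigmaCompact U :=
    have := hU.locallyCompactSpace
    isSigmaCompact_iff_sigmaCompactSpace.2 inferInstance
  have := hα.sigmaFinite_restrict hU.measurableSet hUσ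
  have := hβ.sigmaFinite_restrict hU.measurableSet hUσ
  have := (hα.add hβ).sigmaFinite_restrict hU.measurableSet hUσ
  let ν := (α + β).restrict U
  have hαν : α.restrict U ≪ ν := (Measure.AbsolutelyContinuous.rfl.add_right β).restrict U
  have hβν : β.restrict U ≪ ν := (Measure.AbsolutelyContinuous.rfl.add_right' α).restrict U
  have hαU := hα.mono_measure (Measure.restrict_le_self (s := U))
  have hβU := hβ.mono_measure (Measure.restrict_le_self (s := U))
  have hloc : LocallyIntegrableOn (fun x =>
      ((α.restrict U).rnDeriv ν x).toReal - ((β.restrict U).rnDeriv ν x).toReal) U ν :=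
    (locallyIntegrableOn_iff hU.isLocallyClosed).2 fun K hKU hK =>
      (Measure.integrableOn_toReal_rnDeriv (hαU K hK hKU).ne).sub
        (Measure.integrableOn_toReal_rnDeriv (hβU K hK hKU).ne)
  have hzero := hU.ae_eq_zero_of_integral_contDiff_smul_eq_zero hloc fun g hg hgc hgU => by
    rw [integral_smul_toReal_rnDeriv_sub hαν hβν (hαU.integrable hg.continuous hgc hgU)
      (hβU.integrable hg.continuous hgc hgU), setIntegral_eq_integral_of_tsupport_subset hgU,
      setIntegral_eq_integral_of_tsupport_subset hgU,
      h g (hg.of_le (mod_cast le_top)) hgc hgU, sub_self]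
  refine eq_of_toReal_rnDeriv_ae_eq hαν hβν ?_
  filter_upwards [hzero, ae_restrict_mem hU.measurableSet] with x hx hxU
  exact sub_eq_zero.1 (hx hxU)

end TestFunctions

section Divergence

variable {E : Type*} [NormedAddCommGroup E] [NormedSpace ℝ E] [MeasurableSpace E]
  {μ : Measure E} {v : E → E} {U V : Set E} {σp σm τp τm : Measure E}

/-- The vector field `v` has measure-valued divergence `σp - σm` with respect to `μ` on `U`.
The divergence is encoded by a pair of measures, since a difference of infinite measures is not
a `SignedMeasure`. The pairing of the gradient with `v` is written `fderiv ℝ f x (v x)`, which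
needs no inner product. -/
structure HasMeasureDivergenceOn (μ : Measure E) (v : E → E) (U : Set E) (σp σm : Measure E) :
    Prop where
  finite_pos : FiniteOnCompactsIn σp U
  finite_neg : FiniteOnCompactsIn σm U
  integral_eq : ∀ f : E → ℝ, ContDiff ℝ 1 f → HasCompactSupport f → tsupport f ⊆ U →
    ∫ x, fderiv ℝ f x (v x) ∂μ = ∫ x, f x ∂σm - ∫ x, f x ∂σp

namespace HasMeasureDivergenceOn

theorem mono (h : HasMeasureDivergenceOn μ v V σp σm) (hUV : U ⊆ V) :
    HasMeasureDivergenceOn μ v U σp σm where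
  finite_pos := h.finite_pos.mono hUV
  finite_neg := h.finite_neg.mono hUV
  integral_eq f hf hc hfU := h.integral_eq f hf hc (hfU.trans hUV)

theorem congr [OpensMeasurableSpace E] (h : HasMeasureDivergenceOn μ v U σp σm)
    (hp : FiniteOnCompactsIn τp U) (hm : FiniteOnCompactsIn τm U)
    (hστ : (τp + σm).restrict U = (σp + τm).restrict U) :
    HasMeasureDivergenceOn μ v U τp τm where
  finite_pos := hp
  finite_neg := hm
  integral_eq f hf hc hfU := by
    have hint : ∫ x, f x ∂(τp + σm) = ∫ x, f x ∂(σp + τm) := by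
      rw [← setIntegral_eq_integral_of_tsupport_subset hfU, hστ,
        setIntegral_eq_integral_of_tsupport_subset hfU]
    rw [integral_add_measure (hp.integrable hf.continuous hc hfU)
        (h.finite_neg.integrable hf.continuous hc hfU),
      integral_add_measure (h.finite_pos.integrable hf.continuous hc hfU)
        (hm.integrable hf.continuous hc hfU)] at hint
    linarith [h.integral_eq f hf hc hfU]

variable [FiniteDimensional ℝ E] [BorelSpace E]

theorem restrict_add_eq_restrict_add (hσ : HasMeasureDivergenceOn μ v U σp σm)
    (hτ : HasMeasureDivergenceOn μ v U τp τm) (hU : IsOpen U) :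
    (σp + τm).restrict U = (τp + σm).restrict U := by
  refine restrict_eq_of_forall_integral_contDiff_eq (n := 1) hU
    (hσ.finite_pos.add hτ.finite_neg) (hτ.finite_pos.add hσ.finite_neg) fun f hf hc hfU => ?_
  rw [integral_add_measure (hσ.finite_pos.integrable hf.continuous hc hfU)
      (hτ.finite_neg.integrable hf.continuous hc hfU),
    integral_add_measure (hτ.finite_pos.integrable hf.continuous hc hfU)
      (hσ.finite_neg.integrable hf.continuous hc hfU)]
  linarith [hσ.integral_eq f hf hc hfU, hτ.integral_eq f hf hc hfU]

theorem piecewise {C D : Set E} (hσ : HasMeasureDivergenceOn μ v U σp σm)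
    (hτ : HasMeasureDivergenceOn μ v V τp τm) (hU : IsOpen U) (hV : IsOpen V)
    (hC : MeasurableSet C) (hD : IsClosed D) (hCD : Cᶜ ⊆ D) (hUD : U ∩ D ⊆ V) :
    HasMeasureDivergenceOn μ v U (piecewiseMeasure C σp τp) (piecewiseMeasure C σm τm) := by
  have hoverlap : (σp + τm).restrict (U ∩ V) = (τp + σm).restrict (U ∩ V) :=
    (hσ.mono inter_subset_left).restrict_add_eq_restrict_add (hτ.mono inter_subset_right)
      (hU.inter hV)
  have hUC : U \ C ⊆ V := fun x hx => hUD ⟨hx.1, hCD hx.2⟩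
  exact hσ.congr (hσ.finite_pos.piecewise hτ.finite_pos hC hD hCD hUD)
    (hσ.finite_neg.piecewise hτ.finite_neg hC hD hCD hUD)
    (restrict_piecewiseMeasure_add hC hUC hoverlap)

theorem union (hσU : HasMeasureDivergenceOn μ v U σp σm)
    (hσV : HasMeasureDivergenceOn μ v V σp σm) (hvInt : LocallyIntegrable v μ)
    (hU : IsOpen U) (hV : IsOpen V) :
    HasMeasureDivergenceOn μ v (U ∪ V) σp σm where
  finite_pos := hσU.finite_pos.union hσV.finite_pos hU hV
  finite_neg := hσU.finite_neg.union hσV.finite_neg hU hV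
  integral_eq f hf hc hfUV := by
    obtain ⟨g, h, hg, hh, hgU, hhV, rfl⟩ :=
      exists_contDiff_add_eq_of_tsupport_subset_union (n := 1) hU hV hf hfUV
    have hgc : HasCompactSupport g :=
      hc.of_isClosed_subset (isClosed_tsupport g) (hgU.trans inter_subset_left)
    have hhc : HasCompactSupport h :=
      hc.of_isClosed_subset (isClosed_tsupport h) (hhV.trans inter_subset_left)
    have hgU := hgU.trans inter_subset_right
    have hhV := hhV.trans inter_subset_right
    have hgrad (x : E) : fderiv ℝ (g + h) x (v x) = fderiv ℝ g x (v x) + fderiv ℝ h x (v x) := by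
      rw [fderiv_add (hg.differentiable one_ne_zero x) (hh.differentiable one_ne_zero x),
        add_apply]
    have hgradInt {k : E → ℝ} (hk : ContDiff ℝ 1 k) (hkc : HasCompactSupport k) :
        Integrable (fun x => fderiv ℝ k x (v x)) μ :=
      integrable_clm_apply_of_hasCompactSupport hvInt (hk.continuous_fderiv one_ne_zero)
        (hkc.fderiv ℝ)
    simp only [hgrad, Pi.add_apply]
    rw [integral_add (hgradInt hg hgc) (hgradInt hh hhc),
      integral_add (hσU.finite_neg.integrable hg.continuous hgc hgU)
        (hσV.finite_neg.integrable hh.continuous hhc hhV),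
      integral_add (hσU.finite_pos.integrable hg.continuous hgc hgU)
        (hσV.finite_pos.integrable hh.continuous hhc hhV),
      hσU.integral_eq g hg hgc hgU, hσV.integral_eq h hh hhc hhV]
    ring

end HasMeasureDivergenceOn

theorem measure_valued_divergence_union_general [FiniteDimensional ℝ E] [BorelSpace E]
    (hvInt : LocallyIntegrable v μ) (hU : IsOpen U) (hV : IsOpen V)
    (hσ : HasMeasureDivergenceOn μ v U σp σm) (hτ : HasMeasureDivergenceOn μ v V τp τm) :
    ∃ ρp ρm : Measure E, HasMeasureDivergenceOn μ v (U ∪ V) ρp ρm ∧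
      (∀ A ⊆ U, ρp A + σm A = σp A + ρm A) ∧ (∀ A ⊆ V, ρp A + τm A = τp A + ρm A) := by
  obtain ⟨C, D, hC, hD, hCD, hUD, hVC⟩ := exists_isClosed_union_eq_univ_inter_subset hU hV
  have hρU := hσ.piecewise hτ hU hV hC.measurableSet hD (compl_subset_iff_union.2 hCD) hUD
  have hρV := hτ.piecewise hσ hV hU hC.measurableSet.compl hC (compl_compl C).subset hVC
  rw [piecewiseMeasure_compl, piecewiseMeasure_compl] at hρV
  refine ⟨_, _, hρU.union hρV hvInt hU hV, fun A hA => ?_, fun A hA => ?_⟩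
  · exact add_apply_eq_add_apply_of_restrict_eq (hρU.restrict_add_eq_restrict_add hσ hU) hA
  · exact add_apply_eq_add_apply_of_restrict_eq (hρV.restrict_add_eq_restrict_add hτ hV) hA

end Divergence

/-- **Gluing of the measure-valued divergence.** If `v` has measure-valued divergence
with respect to `μ` on both `Ω₁` and `Ω₂`, then it has measure-valued divergence on
`Ω₁ ∪ Ω₂`, and the glued divergence restricts on each `Ωᵢ` to the given one. -/
theorem measure_valued_divergence_union {d : ℕ}
    (μ : Measure (EuclideanSpace ℝ (Fin d))) [IsLocallyFiniteMeasure μ]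
    (v : EuclideanSpace ℝ (Fin d) → EuclideanSpace ℝ (Fin d))
    (hvMeas : Measurable v) (hvInt : LocallyIntegrable v μ)
    (Ω₁ Ω₂ : Set (EuclideanSpace ℝ (Fin d))) (hΩ₁ : IsOpen Ω₁) (hΩ₂ : IsOpen Ω₂)
    (σp₁ σm₁ σp₂ σm₂ : Measure (EuclideanSpace ℝ (Fin d)))
    (hσp₁ : ∀ K : Set (EuclideanSpace ℝ (Fin d)), IsCompact K → K ⊆ Ω₁ → σp₁ K < ∞)
    (hσm₁ : ∀ K : Set (EuclideanSpace ℝ (Fin d)), IsCompact K → K ⊆ Ω₁ → σm₁ K < ∞)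
    (hσp₂ : ∀ K : Set (EuclideanSpace ℝ (Fin d)), IsCompact K → K ⊆ Ω₂ → σp₂ K < ∞)
    (hσm₂ : ∀ K : Set (EuclideanSpace ℝ (Fin d)), IsCompact K → K ⊆ Ω₂ → σm₂ K < ∞)
    (hdiv₁ : ∀ f : EuclideanSpace ℝ (Fin d) → ℝ,
      ContDiff ℝ 1 f → HasCompactSupport f → tsupport f ⊆ Ω₁ →
      ∫ x, ⟪gradient f x, v x⟫ ∂μ = ∫ x, f x ∂σm₁ - ∫ x, f x ∂σp₁)
    (hdiv₂ : ∀ f : EuclideanSpace ℝ (Fin d) → ℝ,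
      ContDiff ℝ 1 f → HasCompactSupport f → tsupport f ⊆ Ω₂ →
      ∫ x, ⟪gradient f x, v x⟫ ∂μ = ∫ x, f x ∂σm₂ - ∫ x, f x ∂σp₂) :
    ∃ σp σm : Measure (EuclideanSpace ℝ (Fin d)),
      (∀ K : Set (EuclideanSpace ℝ (Fin d)), IsCompact K → K ⊆ Ω₁ ∪ Ω₂ → σp K < ∞) ∧
      (∀ K : Set (EuclideanSpace ℝ (Fin d)), IsCompact K → K ⊆ Ω₁ ∪ Ω₂ → σm K < ∞) ∧
      (∀ f : EuclideanSpace ℝ (Fin d) → ℝ,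
        ContDiff ℝ 1 f → HasCompactSupport f → tsupport f ⊆ Ω₁ ∪ Ω₂ →
        ∫ x, ⟪gradient f x, v x⟫ ∂μ = ∫ x, f x ∂σm - ∫ x, f x ∂σp) ∧
      (∀ A : Set (EuclideanSpace ℝ (Fin d)), MeasurableSet A →
        IsCompact (closure A) → closure A ⊆ Ω₁ →
        σp A + σm₁ A = σp₁ A + σm A) ∧
      (∀ A : Set (EuclideanSpace ℝ (Fin d)), MeasurableSet A →
        IsCompact (closure A) → closure A ⊆ Ω₂ →
        σp A + σm₂ A = σp₂ A + σm A) := by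
  obtain ⟨σp, σm, hσ, hσ₁, hσ₂⟩ := measure_valued_divergence_union_general hvInt hΩ₁ hΩ₂
    ⟨hσp₁, hσm₁, by simpa only [inner_gradient_left] using hdiv₁⟩
    ⟨hσp₂, hσm₂, by simpa only [inner_gradient_left] using hdiv₂⟩
  exact ⟨σp, σm, hσ.finite_pos, hσ.finite_neg,
    by simpa only [inner_gradient_left] using hσ.integral_eq,
    fun A _ _ hA => hσ₁ A (subset_closure.trans hA),
    fun A _ _ hA => hσ₂ A (subset_closure.trans hA)⟩
end

section
/- Let μ be a locally finite Borel measure on ℝ^d and let f : ℝ^d → ℝ be a Lipschitz function with compact support, with Lipschitz constant L. For x ∈ ℝ^d define the asymptotic Lipschitz constant lip_a f(x) := inf over r > 0 of the infimum of all constants K ≥ 0 such that |f(y) − f(z)| ≤ K‖y − z‖ for all y, z in the open ball of radius r centered at x. Then there exists a sequence (f_n) of continuously differentiable functions on ℝ^d with compact support such that: each f_n is Lipschitz with constant at most L; f_n → f in L²(μ); and for every x ∈ ℝ^d, limsup_{n→∞} ‖∇f_n(x)‖ ≤ lip_a f(x). -/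
open MeasureTheory Metric Filter

/-- The asymptotic Lipschitz constant of `f` at `x`: the infimum over `r > 0` of the
infimum of all constants `K ≥ 0` such that `f` is `K`-Lipschitz on the open ball of
radius `r` centered at `x`. -/
noncomputable def asympLipConst {X : Type*} [PseudoMetricSpace X] (f : X → ℝ) (x : X) : ℝ :=
  ⨅ r : {r : ℝ // 0 < r},
    sInf {K : ℝ | 0 ≤ K ∧ ∀ y ∈ ball x r.1, ∀ z ∈ ball x r.1, |f y - f z| ≤ K * dist y z}

/-!
Mollifying at scale `δ` averages translates of `f` by vectors of norm less than `δ`. Averaging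
cannot increase a Lipschitz constant, and the value of the mollification near `x` only sees `f` on
a slightly larger ball. Hence a Lipschitz constant of `f` on `ball x r` is one for the mollification
on `ball x (r - δ)`, and so bounds its derivative at `x` as soon as `δ < r`. Uniform convergence and
supports in a common compact set give the convergence in `Lᵖ(μ)`.
-/

open ContinuousLinearMap Set Function
open scoped Convolution ContDiff Topology NNReal ENNReal

lemma continuous_of_forall_lipschitzOnWith_ball {X Y : Type*} [PseudoMetricSpace X]
    [PseudoMetricSpace Y] {f : X → Y} {x : X}
    (hf : ∀ r > 0, ∃ K, LipschitzOnWith K f (ball x r)) : Continuous f := by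
  refine continuous_iff_continuousAt.2 fun y => ?_
  obtain ⟨K, hK⟩ := hf (dist y x + 1) (by positivity)
  exact hK.continuousOn.continuousAt (isOpen_ball.mem_nhds (mem_ball.2 (lt_add_one _)))

lemma le_asympLipConst {X : Type*} [PseudoMetricSpace X] {f : X → ℝ} {x : X} {a : ℝ}
    (hf : ∀ r > 0, ∃ K, LipschitzOnWith K f (ball x r))
    (ha : ∀ r > 0, ∀ K : ℝ≥0, LipschitzOnWith K f (ball x r) → a ≤ K) :
    a ≤ asympLipConst f x := by
  have : Nonempty {r : ℝ // 0 < r} := ⟨⟨1, one_pos⟩⟩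
  refine le_ciInf fun ⟨r, hr⟩ => le_csInf ?_ ?_
  · obtain ⟨K, hK⟩ := hf r hr
    exact ⟨K, K.2, hK.dist_le_mul⟩
  · rintro K ⟨hK, hfK⟩
    exact ha r hr ⟨K, hK⟩ (LipschitzOnWith.of_dist_le_mul hfK)

section LpConvergence

variable {α ι F : Type*} [MeasurableSpace α] [NormedAddCommGroup F] {μ : Measure α}

lemma eLpNorm_le_of_support_subset_of_norm_le {f : α → F} {s : Set α} {C : ℝ≥0}
    (hs : support f ⊆ s) (hC : ∀ x, ‖f x‖ ≤ C) (p : ℝ≥0∞) :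
    eLpNorm f p μ ≤ C * μ s ^ (1 / p.toReal) := by
  have hle : ∀ x, ‖f x‖ ≤ s.indicator (fun _ => (C : ℝ)) x := fun x => by
    by_cases hx : x ∈ s
    · simpa only [indicator_of_mem hx] using hC x
    · simp only [indicator_of_notMem hx, notMem_support.1 (notMem_subset hs hx), norm_zero, le_refl]
  simpa only [Real.enorm_of_nonneg C.coe_nonneg, ENNReal.ofReal_coe_nnreal] using
    (eLpNorm_mono_real hle).trans (eLpNorm_indicator_const_le (C : ℝ) p)

lemma tendsto_eLpNorm_sub_of_tendstoUniformly {l : Filter ι} {g : ι → α → F} {f : α → F} {s : Set α}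
    (hgf : TendstoUniformly g f l) (hs : μ s ≠ ⊤) (hsupp : ∀ᶠ i in l, support (g i - f) ⊆ s)
    (p : ℝ≥0∞) :
    Tendsto (fun i => eLpNorm (g i - f) p μ) l (𝓝 0) := by
  refine ENNReal.tendsto_nhds_zero.2 fun ε hε => ?_
  have hs' : μ s ^ (1 / p.toReal) ≠ ⊤ := ENNReal.rpow_ne_top_of_nonneg (by positivity) hs
  obtain ⟨δ, hδ, hδε⟩ := ENNReal.exists_nnreal_pos_mul_lt hs' hε.ne'
  filter_upwards [hsupp, Metric.tendstoUniformly_iff.1 hgf δ hδ] with i hi hclose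
  refine (eLpNorm_le_of_support_subset_of_norm_le hi (fun x => ?_) p).trans hδε.le
  rw [Pi.sub_apply, ← dist_eq_norm, dist_comm]
  exact (hclose x).le

end LpConvergence

section Mollification

variable {E F : Type*} [NormedAddCommGroup E] [NormedSpace ℝ E] [FiniteDimensional ℝ E]
  [MeasurableSpace E] [BorelSpace E] [NormedAddCommGroup F] [NormedSpace ℝ F]

/-- The mollification of `f` by a smooth bump `φ` centred at the origin: its convolution with `φ`
normalised to integral one. Haar measure is used for both operations, so the choice of its scale
is immaterial. -/
noncomputable def mollification (φ : ContDiffBump (0 : E)) (f : E → F) : E → F :=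
  φ.normed Measure.addHaar ⋆[lsmul ℝ ℝ, Measure.addHaar] f

variable {f : E → F}

lemma contDiff_mollification (φ : ContDiffBump (0 : E))
    (hf : LocallyIntegrable f Measure.addHaar) : ContDiff ℝ ∞ (mollification φ f) :=
  φ.hasCompactSupport_normed.contDiff_convolution_left _ φ.contDiff_normed hf

lemma support_mollification_subset (φ : ContDiffBump (0 : E)) (f : E → F) :
    support (mollification φ f) ⊆ thickening φ.rOut (support f) := by
  rw [← add_ball_zero, ← φ.support_normed_eq (μ := Measure.addHaar)]
  exact support_convolution_subset_swap _

lemma hasCompactSupport_mollification (φ : ContDiffBump (0 : E)) (hf : HasCompactSupport f) :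
    HasCompactSupport (mollification φ f) :=
  HasCompactSupport.of_support_subset_isCompact (hf.isCompact.cthickening (r := φ.rOut)) <|
    (support_mollification_subset φ f).trans <|
      (thickening_subset_of_subset _ (subset_tsupport f)).trans (thickening_subset_cthickening _ _)

lemma norm_mollification_sub_le {φ : ContDiffBump (0 : E)} {y z : E} {C : ℝ}
    (hf : LocallyIntegrable f Measure.addHaar)
    (hC : ∀ t ∈ ball 0 φ.rOut, ‖f (y - t) - f (z - t)‖ ≤ C) :
    ‖mollification φ f y - mollification φ f z‖ ≤ C := by
  let w := φ.normed Measure.addHaar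
  have hint (x : E) : Integrable (fun t => w t • f (x - t)) Measure.addHaar :=
    φ.hasCompactSupport_normed.convolutionExists_left (lsmul ℝ ℝ) φ.continuous_normed hf x
  have hbound (t : E) : ‖w t • f (y - t) - w t • f (z - t)‖ ≤ w t * C := by
    rw [← smul_sub, norm_smul, Real.norm_of_nonneg (φ.nonneg_normed t)]
    by_cases ht : t ∈ support w
    · rw [φ.support_normed_eq] at ht
      exact mul_le_mul_of_nonneg_left (hC t ht) (φ.nonneg_normed t)
    · have hwt : φ.normed Measure.addHaar t = 0 := notMem_support.1 ht
      simp only [w, hwt, zero_mul, le_refl]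
  calc ‖mollification φ f y - mollification φ f z‖
      = ‖∫ t, w t • f (y - t) - w t • f (z - t) ∂Measure.addHaar‖ := by
        rw [integral_sub (hint y) (hint z)]; rfl
    _ ≤ ∫ t, w t * C ∂Measure.addHaar :=
        norm_integral_le_of_norm_le (φ.integrable_normed.mul_const C) (.of_forall hbound)
    _ = C := by rw [integral_mul_const, φ.integral_normed, one_mul]

lemma lipschitzOnWith_mollification {φ : ContDiffBump (0 : E)} {K : ℝ≥0} {s : Set E}
    (hf : LocallyIntegrable f Measure.addHaar)
    (hK : LipschitzOnWith K f (thickening φ.rOut s)) :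
    LipschitzOnWith K (mollification φ f) s := by
  have hmem : ∀ x ∈ s, ∀ t ∈ ball (0 : E) φ.rOut, x - t ∈ thickening φ.rOut s := by
    intro x hx t ht
    exact mem_thickening_iff.2 ⟨x, hx, by simpa using ht⟩
  refine LipschitzOnWith.of_dist_le_mul fun y hy z hz => ?_
  rw [dist_eq_norm]
  refine norm_mollification_sub_le hf fun t ht => ?_
  simpa only [dist_eq_norm, sub_sub_sub_cancel_right] using
    hK.dist_le_mul _ (hmem y hy t ht) _ (hmem z hz t ht)

lemma lipschitzWith_mollification {K : ℝ≥0} (φ : ContDiffBump (0 : E)) (hf : LipschitzWith K f) :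
    LipschitzWith K (mollification φ f) :=
  lipschitzOnWith_univ.1 <|
    lipschitzOnWith_mollification hf.continuous.locallyIntegrable hf.lipschitzOnWith

lemma norm_fderiv_mollification_le {φ : ContDiffBump (0 : E)} {K : ℝ≥0} {x : E} {r : ℝ}
    (hf : LocallyIntegrable f Measure.addHaar) (hK : LipschitzOnWith K f (ball x r))
    (hφ : φ.rOut < r) :
    ‖fderiv ℝ (mollification φ f) x‖ ≤ K := by
  have hsub : thickening φ.rOut (ball x (r - φ.rOut)) ⊆ ball x r := by
    simpa only [add_sub_cancel] using thickening_ball x φ.rOut (r - φ.rOut)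
  exact norm_fderiv_le_of_lipschitzOn ℝ (ball_mem_nhds x (sub_pos.2 hφ))
    (lipschitzOnWith_mollification hf (hK.mono hsub))

section Limits

variable {ι : Type*} {l : Filter ι} {φ : ι → ContDiffBump (0 : E)}

lemma tendstoUniformly_mollification [CompleteSpace F]
    (hφ : Tendsto (fun i => (φ i).rOut) l (𝓝 0)) (hf : UniformContinuous f) :
    TendstoUniformly (fun i => mollification (φ i) f) f l := by
  refine Metric.tendstoUniformly_iff.2 fun ε hε => ?_
  obtain ⟨δ, hδ, hfδ⟩ := Metric.uniformContinuous_iff.1 hf (ε / 2) (half_pos hε)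
  filter_upwards [hφ.eventually_lt_const hδ] with i hi x
  rw [dist_comm]
  refine lt_of_le_of_lt ?_ (half_lt_self hε)
  exact (φ i).dist_normed_convolution_le hf.continuous.aestronglyMeasurable
    fun y hy => (hfδ ((mem_ball.1 hy).trans hi)).le

lemma tendsto_eLpNorm_mollification_sub [CompleteSpace F] {μ : Measure E}
    [IsLocallyFiniteMeasure μ] (hφ : Tendsto (fun i => (φ i).rOut) l (𝓝 0))
    (hf : Continuous f) (hsupp : HasCompactSupport f) (p : ℝ≥0∞) :
    Tendsto (fun i => eLpNorm (mollification (φ i) f - f) p μ) l (𝓝 0) := by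
  refine tendsto_eLpNorm_sub_of_tendstoUniformly (s := cthickening 1 (tsupport f))
    (tendstoUniformly_mollification hφ (hsupp.uniformContinuous_of_continuous hf))
    hsupp.isCompact.cthickening.measure_ne_top ?_ p
  filter_upwards [hφ.eventually_le_const one_pos] with i hi
  refine (support_sub _ _).trans (union_subset ?_ ?_)
  · calc support (mollification (φ i) f)
        ⊆ thickening (φ i).rOut (support f) := support_mollification_subset _ _
      _ ⊆ thickening 1 (tsupport f) :=
        (thickening_mono hi _).trans (thickening_subset_of_subset _ (subset_tsupport f))
      _ ⊆ cthickening 1 (tsupport f) := thickening_subset_cthickening _ _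
  · exact (subset_tsupport f).trans (self_subset_cthickening _)

lemma limsup_norm_fderiv_mollification_le [l.NeBot] {f : E → ℝ} {x : E}
    (hφ : Tendsto (fun i => (φ i).rOut) l (𝓝 0))
    (hf : ∀ r > 0, ∃ K, LipschitzOnWith K f (ball x r)) :
    limsup (fun i => ‖fderiv ℝ (mollification (φ i) f) x‖) l ≤ asympLipConst f x := by
  have hloc : LocallyIntegrable f Measure.addHaar :=
    (continuous_of_forall_lipschitzOnWith_ball hf).locallyIntegrable
  refine le_asympLipConst hf fun r hr K hK => ?_
  refine limsup_le_of_le (isCoboundedUnder_le_of_le l fun _ => norm_nonneg _) ?_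
  filter_upwards [hφ.eventually_lt_const hr] with i hi
  exact norm_fderiv_mollification_le hloc hK hi

end Limits

end Mollification

theorem lipschitz_approx_by_C1_general {E : Type*} [NormedAddCommGroup E] [NormedSpace ℝ E]
    [FiniteDimensional ℝ E] [MeasurableSpace E] [BorelSpace E] (μ : Measure E)
    [IsLocallyFiniteMeasure μ] (f : E → ℝ) (L : ℝ≥0) (hf : LipschitzWith L f)
    (hsupp : HasCompactSupport f) :
    ∃ fn : ℕ → E → ℝ,
      (∀ n, ContDiff ℝ ∞ (fn n)) ∧
      (∀ n, HasCompactSupport (fn n)) ∧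
      (∀ n, LipschitzWith L (fn n)) ∧
      (∀ p, Tendsto (fun n => eLpNorm (fn n - f) p μ) atTop (𝓝 0)) ∧
      ∀ x, limsup (fun n => ‖fderiv ℝ (fn n) x‖) atTop ≤ asympLipConst f x := by
  let φ (n : ℕ) : ContDiffBump (0 : E) :=
    ⟨1 / ((n : ℝ) + 1) / 2, 1 / ((n : ℝ) + 1), by positivity, half_lt_self (by positivity)⟩
  have hφ : Tendsto (fun n => (φ n).rOut) atTop (𝓝 0) := tendsto_one_div_add_atTop_nhds_zero_nat
  exact ⟨fun n => mollification (φ n) f,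
    fun n => contDiff_mollification (φ n) hf.continuous.locallyIntegrable,
    fun n => hasCompactSupport_mollification (φ n) hsupp,
    fun n => lipschitzWith_mollification (φ n) hf,
    tendsto_eLpNorm_mollification_sub hφ hf.continuous hsupp,
    fun _ => limsup_norm_fderiv_mollification_le hφ fun _ _ => ⟨L, hf.lipschitzOnWith⟩⟩

/-- Approximation of a compactly supported Lipschitz function by `C¹` compactly
supported functions, uniformly Lipschitz, converging in `L²(μ)` and with gradient
norms asymptotically bounded by the asymptotic Lipschitz constant. -/
theorem lipschitz_approx_by_C1 {d : ℕ}
    (μ : Measure (EuclideanSpace ℝ (Fin d))) [IsLocallyFiniteMeasure μ]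
    (f : EuclideanSpace ℝ (Fin d) → ℝ) (L : NNReal) (hf : LipschitzWith L f)
    (hsupp : HasCompactSupport f) :
    ∃ fn : ℕ → EuclideanSpace ℝ (Fin d) → ℝ,
      (∀ n, ContDiff ℝ 1 (fn n)) ∧
      (∀ n, HasCompactSupport (fn n)) ∧
      (∀ n, LipschitzWith L (fn n)) ∧
      Tendsto (fun n => eLpNorm (fun x => fn n x - f x) 2 μ) atTop (nhds 0) ∧
      ∀ x, limsup (fun n => ‖gradient (fn n) x‖) atTop ≤ asympLipConst f x := by
  obtain ⟨fn, hsmooth, hcomp, hlip, hLp, hlim⟩ := lipschitz_approx_by_C1_general μ f L hf hsupp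
  exact ⟨fn, fun n => (hsmooth n).of_le (by simp), hcomp, hlip, hLp 2,
    by simpa only [gradient, LinearIsometryEquiv.norm_map] using hlim⟩
end
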